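/- (Deterministic additive-error embedding of JS into ℓ₂²) There is an absolute constant C > 0 such that for every integer d ≥ 1 and every ε ∈ (0,1) there exist an integer m ≤ C·(d²/ε)·ln(d/ε) and a map φ : Δ_d → ℝ^m such that for all p, q ∈ Δ_d: |‖φ(p) − φ(q)‖₂² − JS(p,q)| ≤ ε. -/

import Mathlib

open Real

/-- One-dimensional Jensen–Shannon divergence (with `0·log 0 = 0`, `f_J(0,0) = 0`,
which hold automatically since `Real.log 0 = 0` and `0/0 = 0` in Lean). -/
noncomputable def fJ (x y : ℝ) : ℝ :=
  x * Real.log (2 * x / (x + y)) + y * Real.log (2 * y / (x + y))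

/-- The Jensen–Shannon divergence on the simplex `Δ_d`. -/
noncomputable def JS {d : ℕ} (p q : Fin d → ℝ) : ℝ := ∑ i, fJ (p i) (q i)

open Filter Topology MeasureTheory intervalIntegral

/-- The kernel `(x + y) log (x + y) - x log x - y log y`, whose induced squared distance is
twice the one-dimensional Jensen–Shannon divergence. -/
noncomputable def entropyKernel (x y : ℝ) : ℝ :=
  (x + y) * log (x + y) - x * log x - y * log y

/-- Feature functions representing `entropyKernel` on `L²(0, ∞)`. -/
noncomputable def expFeature (x t : ℝ) : ℝ := (1 - exp (-(x * t))) / t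

lemma fJ_eq_mul_log {x y : ℝ} (hx : 0 ≤ x) (hy : 0 ≤ y) :
    fJ x y = x * log x + y * log y - (x + y) * log (x + y) + (x + y) * log 2 := by
  have key : ∀ {a b : ℝ}, 0 ≤ a → 0 ≤ b →
      a * log (2 * a / (a + b)) = a * log 2 + a * log a - a * log (a + b) := by
    intro a b ha hb
    rcases ha.eq_or_lt with rfl | ha
    · simp
    · rw [log_div (by positivity) (by positivity), log_mul (by norm_num) ha.ne']
      ring
  have hyx := key hy hx
  rw [add_comm y x] at hyx
  rw [fJ, key hx hy, hyx]
  ring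

lemma entropyKernel_polarization {x y : ℝ} (hx : 0 ≤ x) (hy : 0 ≤ y) :
    entropyKernel x x + entropyKernel y y - 2 * entropyKernel x y = 2 * fJ x y := by
  have key : ∀ {a : ℝ}, 0 ≤ a → (a + a) * log (a + a) = 2 * a * log 2 + 2 * (a * log a) := by
    intro a ha
    rcases ha.eq_or_lt with rfl | ha
    · simp
    · rw [← two_mul, log_mul (by norm_num) ha.ne']
      ring
  rw [fJ_eq_mul_log hx hy, entropyKernel, entropyKernel, entropyKernel, key hx, key hy]
  ring

lemma tendsto_integral_frullani_exp {a b : ℝ} (ha : 0 < a) (hb : 0 < b) :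
    Tendsto (fun p : ℝ × ℝ ↦ ∫ t in p.1..p.2, t⁻¹ * (exp (-(a * t)) - exp (-(b * t))))
      ((𝓝[>] 0) ×ˢ atTop) (𝓝 (log (b / a))) := by
  have hc : Continuous fun t : ℝ ↦ exp (-t) := by fun_prop
  have h0 : Tendsto (fun t : ℝ ↦ exp (-t)) (𝓝[>] 0) (𝓝 1) := by
    simpa using (hc.tendsto 0).mono_left nhdsWithin_le_nhds
  simpa using Frullani.tendsto_intervalIntegral
    (hc.locallyIntegrable.locallyIntegrableOn _) ha hb h0
    (tendsto_exp_neg_atTop_nhds_zero)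

lemma hasDerivAt_expFeature_mul (x y : ℝ) {t : ℝ} (ht : t ≠ 0) :
    HasDerivAt (fun t ↦ -(expFeature x t * (1 - exp (-(y * t)))))
      (expFeature x t * expFeature y t
        - (x * (t⁻¹ * (exp (-(x * t)) - exp (-((x + y) * t))))
          + y * (t⁻¹ * (exp (-(y * t)) - exp (-((x + y) * t)))))) t := by
  have he : ∀ z : ℝ, HasDerivAt (fun t ↦ 1 - exp (-(z * t))) (z * exp (-(z * t))) t := by
    intro z
    have h : HasDerivAt (fun t ↦ 1 - exp (-(z * t))) (-(exp (-(z * t)) * -(z * 1))) t :=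
      (((hasDerivAt_id t).const_mul z).neg.exp).const_sub 1
    exact h.congr_deriv (by ring)
  refine (((he x).div (hasDerivAt_id t) ht).mul (he y)).neg.congr_deriv ?_
  have hxy : exp (-((x + y) * t)) = exp (-(x * t)) * exp (-(y * t)) := by
    rw [← exp_add]; ring_nf
  simp only [expFeature, hxy, id, Pi.div_apply]
  field_simp
  ring

lemma continuousOn_expFeature (x : ℝ) : ContinuousOn (expFeature x) (Set.Ioi 0) := by
  unfold expFeature
  exact ContinuousOn.div (by fun_prop) (by fun_prop) fun t ht ↦ (Set.mem_Ioi.1 ht).ne'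

lemma uIcc_subset_Ioi_zero {a b : ℝ} (ha : 0 < a) (hb : 0 < b) : Set.uIcc a b ⊆ Set.Ioi 0 :=
  fun _ ht ↦ lt_of_lt_of_le (lt_min ha hb) ht.1

lemma integral_expFeature_mul (x y : ℝ) {a b : ℝ} (ha : 0 < a) (hb : 0 < b) :
    ∫ t in a..b, expFeature x t * expFeature y t =
      (expFeature x a * (1 - exp (-(y * a))) - expFeature x b * (1 - exp (-(y * b))))
      + x * (∫ t in a..b, t⁻¹ * (exp (-(x * t)) - exp (-((x + y) * t))))
      + y * (∫ t in a..b, t⁻¹ * (exp (-(y * t)) - exp (-((x + y) * t)))) := by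
  have hsub := uIcc_subset_Ioi_zero ha hb
  have hinv : ContinuousOn (fun t : ℝ ↦ t⁻¹) (Set.uIcc a b) :=
    ContinuousOn.inv₀ continuousOn_id fun t ht ↦ (Set.mem_Ioi.1 (hsub ht)).ne'
  have hi : ∀ z : ℝ, IntervalIntegrable
      (fun t ↦ z * (t⁻¹ * (exp (-(z * t)) - exp (-((x + y) * t))))) volume a b := fun z ↦
    (continuousOn_const.mul (hinv.mul (by fun_prop))).intervalIntegrable
  have hf : IntervalIntegrable (fun t ↦ expFeature x t * expFeature y t) volume a b :=
    (((continuousOn_expFeature x).mul (continuousOn_expFeature y)).mono hsub).intervalIntegrable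
  have h := integral_eq_sub_of_hasDerivAt
    (fun t ht ↦ hasDerivAt_expFeature_mul x y (Set.mem_Ioi.1 (hsub ht)).ne')
    (hf.sub ((hi x).add (hi y)))
  rw [integral_sub hf ((hi x).add (hi y)), integral_add (hi x) (hi y),
    intervalIntegral.integral_const_mul, intervalIntegral.integral_const_mul] at h
  linarith

lemma one_sub_exp_neg_mem_Icc {s : ℝ} (hs : 0 ≤ s) :
    0 ≤ 1 - exp (-s) ∧ 1 - exp (-s) ≤ s ∧ 1 - exp (-s) ≤ 1 := by
  have h1 := add_one_le_exp (-s)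
  have h2 : exp (-s) ≤ 1 := exp_le_one_iff.2 (by linarith)
  have h3 := exp_pos (-s)
  refine ⟨?_, ?_, ?_⟩ <;> linarith

lemma tendsto_expFeature_mul_nhdsGT_zero {x y : ℝ} (hx : 0 ≤ x) (hy : 0 ≤ y) :
    Tendsto (fun t ↦ expFeature x t * (1 - exp (-(y * t)))) (𝓝[>] 0) (𝓝 0) := by
  have hlim : Tendsto (fun t : ℝ ↦ x * (y * t)) (𝓝[>] 0) (𝓝 0) := by
    have hc : Continuous fun t : ℝ ↦ x * (y * t) := by fun_prop
    simpa using (hc.tendsto 0).mono_left nhdsWithin_le_nhds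
  refine tendsto_of_tendsto_of_tendsto_of_le_of_le' tendsto_const_nhds hlim ?_ ?_
  all_goals
    filter_upwards [self_mem_nhdsWithin] with t ht
    have ht : 0 < t := ht
    obtain ⟨hx0, hx1, -⟩ := one_sub_exp_neg_mem_Icc (mul_nonneg hx ht.le)
    obtain ⟨hy0, hy1, -⟩ := one_sub_exp_neg_mem_Icc (mul_nonneg hy ht.le)
    unfold expFeature
  · positivity
  · exact mul_le_mul ((div_le_iff₀ ht).2 hx1) hy1 hy0 hx

lemma tendsto_expFeature_mul_atTop {x y : ℝ} (hx : 0 ≤ x) (hy : 0 ≤ y) :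
    Tendsto (fun t ↦ expFeature x t * (1 - exp (-(y * t)))) atTop (𝓝 0) := by
  refine tendsto_of_tendsto_of_tendsto_of_le_of_le' tendsto_const_nhds tendsto_inv_atTop_zero ?_ ?_
  all_goals
    filter_upwards [eventually_gt_atTop 0] with t ht
    obtain ⟨hx0, -, hx1⟩ := one_sub_exp_neg_mem_Icc (mul_nonneg hx ht.le)
    obtain ⟨hy0, -, hy1⟩ := one_sub_exp_neg_mem_Icc (mul_nonneg hy ht.le)
    unfold expFeature
  · positivity
  · rw [div_mul_eq_mul_div, div_le_iff₀ ht, inv_mul_cancel₀ ht.ne']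
    exact mul_le_one₀ hx1 hy0 hy1

lemma tendsto_integral_expFeature_mul {x y : ℝ} (hx : 0 ≤ x) (hy : 0 ≤ y) :
    Tendsto (fun p : ℝ × ℝ ↦ ∫ t in p.1..p.2, expFeature x t * expFeature y t)
      ((𝓝[>] 0) ×ˢ atTop) (𝓝 (entropyKernel x y)) := by
  rcases hx.eq_or_lt with rfl | hx'
  · simp [entropyKernel, expFeature]
  rcases hy.eq_or_lt with rfl | hy'
  · simp [entropyKernel, expFeature]
  have hxy : 0 < x + y := by positivity
  have hlim := ((((tendsto_expFeature_mul_nhdsGT_zero hx hy).comp tendsto_fst).sub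
    ((tendsto_expFeature_mul_atTop hx hy).comp tendsto_snd)).add
    ((tendsto_integral_frullani_exp hx' hxy).const_mul x)).add
    ((tendsto_integral_frullani_exp hy' hxy).const_mul y)
  have hval : (0 : ℝ) - 0 + x * log ((x + y) / x) + y * log ((x + y) / y) = entropyKernel x y := by
    rw [log_div hxy.ne' hx'.ne', log_div hxy.ne' hy'.ne', entropyKernel]
    ring
  rw [hval] at hlim
  refine hlim.congr' ?_
  filter_upwards [prod_mem_prod self_mem_nhdsWithin (Ioi_mem_atTop (0 : ℝ))] with p hp
  exact (integral_expFeature_mul x y hp.1 hp.2).symm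

lemma entropyKernel_comm (x y : ℝ) : entropyKernel x y = entropyKernel y x := by
  rw [entropyKernel, entropyKernel, add_comm y x]
  ring

lemma posSemidef_entropyKernel {n : ℕ} (x : Fin n → ℝ) (hx : ∀ i, 0 ≤ x i) :
    (Matrix.of fun i j ↦ entropyKernel (x i) (x j)).PosSemidef := by
  refine Matrix.PosSemidef.of_dotProduct_mulVec_nonneg ?_ fun c ↦ ?_
  · ext i j
    simp [entropyKernel_comm (x j)]
  have hlim : Tendsto (fun p : ℝ × ℝ ↦ ∑ i, ∑ j, c i * (c j *
      ∫ t in p.1..p.2, expFeature (x i) t * expFeature (x j) t)) ((𝓝[>] 0) ×ˢ atTop)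
      (𝓝 (∑ i, ∑ j, c i * (c j * entropyKernel (x i) (x j)))) :=
    tendsto_finsetSum _ fun i _ ↦ tendsto_finsetSum _ fun j _ ↦
      ((tendsto_integral_expFeature_mul (hx i) (hx j)).const_mul _).const_mul _
  have hval : star c ⬝ᵥ (Matrix.of fun i j ↦ entropyKernel (x i) (x j)).mulVec c =
      ∑ i, ∑ j, c i * (c j * entropyKernel (x i) (x j)) := by
    simp [dotProduct, Matrix.mulVec, Finset.mul_sum, mul_comm]
  rw [hval]
  refine ge_of_tendsto hlim ?_
  filter_upwards [prod_mem_prod (Ioo_mem_nhdsGT (zero_lt_one' ℝ)) (Ioi_mem_atTop (1 : ℝ))]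
    with p hp
  have hp1 : 0 < p.1 := hp.1.1
  have hp12 : p.1 ≤ p.2 := (hp.1.2.trans hp.2).le
  have hsub := uIcc_subset_Ioi_zero hp1 (hp1.trans_le hp12)
  have hi : ∀ i j, IntervalIntegrable
      (fun t ↦ c i * (c j * (expFeature (x i) t * expFeature (x j) t))) volume p.1 p.2 :=
    fun i j ↦ ((((((continuousOn_expFeature (x i)).mul
      (continuousOn_expFeature (x j))).mono hsub).intervalIntegrable).const_mul _).const_mul _)
  have hsq : ∑ i, ∑ j, c i * (c j * ∫ t in p.1..p.2, expFeature (x i) t * expFeature (x j) t) =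
      ∫ t in p.1..p.2, (∑ i, c i * expFeature (x i) t) ^ 2 := by
    simp_rw [← intervalIntegral.integral_const_mul]
    simp_rw [← integral_finsetSum fun j _ ↦ hi _ j]
    rw [← integral_finsetSum fun i _ ↦ by
      simpa [Finset.sum_fn] using IntervalIntegrable.sum Finset.univ fun j _ ↦ hi i j]
    refine integral_congr fun t _ ↦ ?_
    simp only [sq, Finset.sum_mul_sum]
    exact Finset.sum_congr rfl fun i _ ↦ Finset.sum_congr rfl fun j _ ↦ by ring
  rw [hsq]
  exact integral_nonneg hp12 fun t _ ↦ sq_nonneg _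

/-- Any `n` nonnegative reals embed isometrically into `ℝⁿ` with the squared Euclidean distance
equal to the one-dimensional Jensen–Shannon divergence. -/
lemma exists_isometric_embedding_fJ {n : ℕ} (x : Fin n → ℝ) (hx : ∀ i, 0 ≤ x i) :
    ∃ w : Fin n → Fin n → ℝ, ∀ i j, ∑ k, (w i k - w j k) ^ 2 = fJ (x i) (x j) := by
  obtain ⟨B, hB⟩ : ∃ B : Matrix (Fin n) (Fin n) ℝ,
      (Matrix.of fun i j ↦ entropyKernel (x i) (x j)) = star B * B := by
    open scoped MatrixOrder in
    exact CStarAlgebra.nonneg_iff_eq_star_mul_self.mp (posSemidef_entropyKernel x hx).nonneg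
  have hK : ∀ i j, entropyKernel (x i) (x j) = ∑ k, B k i * B k j := by
    intro i j
    simpa [Matrix.mul_apply] using congrFun (congrFun hB i) j
  refine ⟨fun i k ↦ B k i / √2, fun i j ↦ ?_⟩
  have h2 : ∀ k, (B k i / √2 - B k j / √2) ^ 2 =
      (B k i * B k i + B k j * B k j - 2 * (B k i * B k j)) / 2 := by
    intro k
    rw [← sub_div, div_pow, sq_sqrt (by norm_num)]
    ring
  have hp := entropyKernel_polarization (hx i) (hx j)
  simp only [h2, ← Finset.sum_div, Finset.sum_sub_distrib, Finset.sum_add_distrib,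
    ← Finset.mul_sum, ← hK, hp]
  ring

lemma abs_mul_log_add_sub_le {a c δ : ℝ} (ha : 0 ≤ a) (hc : 0 ≤ c) (hcδ : c ≤ δ) (hδ : δ ≤ 1)
    (hac : a + c ≤ 2) :
    |(a + c) * log (a + c) - a * log a| ≤ δ * (3 + log δ⁻¹) := by
  rcases hc.eq_or_lt with rfl | hc
  · have : 0 ≤ log δ⁻¹ := by rw [log_inv]; linarith [log_nonpos hcδ hδ]
    simp only [add_zero, sub_self, abs_zero]
    positivity
  have hδ0 : 0 < δ := hc.trans_le hcδ
  have hlog : 0 ≤ log δ⁻¹ := by rw [log_inv]; linarith [log_nonpos hδ0.le hδ]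
  have hlower : c * log c⁻¹ ≤ δ + δ * log δ⁻¹ := by
    have h1 : log c⁻¹ = log (δ / c) + log δ⁻¹ := by
      rw [log_div hδ0.ne' hc.ne', log_inv, log_inv]; ring
    have h2 : c * log (δ / c) ≤ δ := by
      calc c * log (δ / c) ≤ c * (δ / c) := by
            gcongr; exact log_le_self (by positivity)
        _ = δ := by field_simp
    rw [h1, mul_add]
    gcongr
  have hclog : c * log c ≤ c * log (a + c) := by gcongr; linarith
  have hup : c * log (a + c) ≤ c := by
    have : log (a + c) ≤ a + c - 1 := log_le_sub_one_of_pos (by linarith)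
    nlinarith
  have ha1 : 0 ≤ a * (log (a + c) - log a) ∧ a * (log (a + c) - log a) ≤ c := by
    rcases ha.eq_or_lt with rfl | ha
    · simpa using hc.le
    constructor
    · exact mul_nonneg ha.le (sub_nonneg.2 (log_le_log ha (by linarith)))
    · rw [← log_div (by positivity) ha.ne']
      calc a * log ((a + c) / a) ≤ a * ((a + c) / a - 1) := by
            gcongr; exact log_le_sub_one_of_pos (by positivity)
        _ = c := by field_simp; ring
  rw [log_inv] at hlower
  have hpos : 0 ≤ δ * log δ⁻¹ := by positivity
  rw [abs_le]
  constructor <;> nlinarith [ha1.1, ha1.2]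

lemma abs_fJ_sub_fJ_add_le {x y c e δ : ℝ} (hx : 0 ≤ x) (hy : 0 ≤ y) (hc : 0 ≤ c) (he : 0 ≤ e)
    (hcδ : c ≤ δ) (heδ : e ≤ δ) (hδ0 : 0 < δ) (hδ : 2 * δ ≤ 1) (hxc : x + c ≤ 1)
    (hye : y + e ≤ 1) :
    |fJ x y - fJ (x + c) (y + e)| ≤ δ * (14 + 4 * log δ⁻¹) := by
  have h1 := abs_le.1 (abs_mul_log_add_sub_le hx hc hcδ (by linarith) (by linarith))
  have h2 := abs_le.1 (abs_mul_log_add_sub_le hy he heδ (by linarith) (by linarith))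
  have h3 := abs_le.1 (abs_mul_log_add_sub_le (δ := 2 * δ) (add_nonneg hx hy) (add_nonneg hc he)
    (by linarith) hδ (by linarith))
  have hsum : x + y + (c + e) = x + c + (y + e) := by ring
  have hlog : log (2 * δ)⁻¹ ≤ log δ⁻¹ := by
    gcongr; linarith
  have hlog' := mul_le_mul_of_nonneg_left hlog hδ0.le
  have hl2 : 0 ≤ log 2 := log_nonneg (by norm_num)
  have hl2' : log 2 ≤ 1 := by linarith [log_two_lt_d9]
  have hce : (c + e) * log 2 ≤ 2 * δ := by nlinarith
  have hce0 : 0 ≤ (c + e) * log 2 := by positivity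
  rw [hsum] at h3
  rw [fJ_eq_mul_log hx hy, fJ_eq_mul_log (add_nonneg hx hc) (add_nonneg hy he), abs_le]
  constructor <;> nlinarith [h1.1, h1.2, h2.1, h2.2, h3.1, h3.2]

lemma abs_fJ_floor_sub_fJ_le {x y : ℝ} {N : ℕ} (hN : 2 ≤ N) (hx : x ∈ Set.Icc (0 : ℝ) 1)
    (hy : y ∈ Set.Icc (0 : ℝ) 1) :
    |fJ (⌊N * x⌋₊ / N) (⌊N * y⌋₊ / N) - fJ x y| ≤ (14 + 4 * log N) / N := by
  have hN0 : (0 : ℝ) < N := by exact_mod_cast (by omega : 0 < N)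
  have hN2 : (2 : ℝ) ≤ N := by exact_mod_cast hN
  have key : ∀ z : ℝ, 0 ≤ z → 0 ≤ z - ⌊N * z⌋₊ / N ∧ z - ⌊N * z⌋₊ / N ≤ (N : ℝ)⁻¹ := by
    intro z hz
    have h1 := Nat.floor_le (mul_nonneg hN0.le hz)
    have h2 := (Nat.lt_floor_add_one (N * z)).le
    constructor
    · rw [sub_nonneg, div_le_iff₀ hN0]; linarith
    · rw [sub_le_iff_le_add, inv_eq_one_div, ← add_div, le_div_iff₀ hN0]; linarith
  obtain ⟨hx1, hx2⟩ := key x hx.1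
  obtain ⟨hy1, hy2⟩ := key y hy.1
  have h := abs_fJ_sub_fJ_add_le (x := ⌊N * x⌋₊ / N) (y := ⌊N * y⌋₊ / N) (δ := (N : ℝ)⁻¹)
    (by positivity) (by positivity) hx1 hy1 hx2 hy2 (by positivity)
    (by rw [← div_eq_mul_inv, div_le_one hN0]; exact hN2)
    (by linarith [hx.2]) (by linarith [hy.2])
  rw [inv_inv, add_sub_cancel, add_sub_cancel] at h
  rwa [div_eq_inv_mul (14 + 4 * log (N : ℝ))]

/-- Rounding every coordinate down to a grid of mesh `1 / N` gives an embedding of the simplex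
into `ℝ^(d (N + 1))`. -/
lemma exists_grid_embedding_JS (d : ℕ) {N : ℕ} (hN : 2 ≤ N) :
    ∃ φ : (Fin d → ℝ) → EuclideanSpace ℝ (Fin (d * (N + 1))),
      ∀ p ∈ stdSimplex ℝ (Fin d), ∀ q ∈ stdSimplex ℝ (Fin d),
        |‖φ p - φ q‖ ^ 2 - JS p q| ≤ d * ((14 + 4 * log N) / N) := by
  obtain ⟨w, hw⟩ := exists_isometric_embedding_fJ (fun i : Fin (N + 1) ↦ ((i : ℕ) : ℝ) / N)
    fun i ↦ by positivity
  let idx : ℝ → Fin (N + 1) := fun x ↦ Fin.ofNat (N + 1) ⌊N * x⌋₊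
  have hidx : ∀ x ∈ Set.Icc (0 : ℝ) 1, ((idx x : Fin (N + 1)) : ℕ) = ⌊N * x⌋₊ := by
    intro x hx
    refine Nat.mod_eq_of_lt (Nat.lt_succ_of_le (Nat.floor_le_of_le ?_))
    exact mul_le_of_le_one_right (Nat.cast_nonneg N) hx.2
  refine ⟨fun p ↦ WithLp.toLp 2 fun k ↦
    w (idx (p (finProdFinEquiv.symm k).1)) (finProdFinEquiv.symm k).2, fun p hp q hq ↦ ?_⟩
  have hmem : ∀ {r : Fin d → ℝ}, r ∈ stdSimplex ℝ (Fin d) → ∀ i, r i ∈ Set.Icc (0 : ℝ) 1 :=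
    fun hr i ↦ mem_Icc_of_mem_stdSimplex hr i
  have hnorm : ‖(WithLp.toLp 2 fun k : Fin (d * (N + 1)) ↦
        w (idx (p (finProdFinEquiv.symm k).1)) (finProdFinEquiv.symm k).2) -
      (WithLp.toLp 2 fun k : Fin (d * (N + 1)) ↦
        w (idx (q (finProdFinEquiv.symm k).1)) (finProdFinEquiv.symm k).2)‖ ^ 2 =
      ∑ i, fJ (⌊N * p i⌋₊ / N) (⌊N * q i⌋₊ / N) := by
    rw [EuclideanSpace.real_norm_sq_eq]
    simp only [PiLp.sub_apply]
    rw [Equiv.sum_comp finProdFinEquiv.symm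
      fun k : Fin d × Fin (N + 1) ↦ (w (idx (p k.1)) k.2 - w (idx (q k.1)) k.2) ^ 2,
      Fintype.sum_prod_type]
    refine Finset.sum_congr rfl fun i _ ↦ ?_
    dsimp only
    rw [hw, hidx _ (hmem hp i), hidx _ (hmem hq i)]
  rw [hnorm, JS, ← Finset.sum_sub_distrib]
  calc _ ≤ ∑ i, |fJ (⌊N * p i⌋₊ / N) (⌊N * q i⌋₊ / N) - fJ (p i) (q i)| :=
        Finset.abs_sum_le_sum_abs _ _
    _ ≤ ∑ _i : Fin d, (14 + 4 * log N) / N :=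
        Finset.sum_le_sum fun i _ ↦ abs_fJ_floor_sub_fJ_le hN (hmem hp i) (hmem hq i)
    _ = _ := by simp

lemma JS_self {d : ℕ} (p : Fin d → ℝ) : JS p p = 0 := by
  refine Finset.sum_eq_zero fun i _ ↦ ?_
  rcases eq_or_ne (p i) 0 with h | h
  · simp [fJ, h]
  · rw [fJ, ← two_mul (p i), div_self (by simpa using h)]
    simp

/-- A mesh parameter of order `T log T` makes the rounding error at most `1 / T`. -/
lemma exists_mesh {T : ℝ} (hT : 2 ≤ T) :
    ∃ N : ℕ, 2 ≤ N ∧ (N : ℝ) + 1 ≤ 65 * (T * log T) ∧ T * (14 + 4 * log N) ≤ N := by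
  have hlog2 := log_two_gt_d9
  have hlogT : log 2 ≤ log T := log_le_log (by norm_num) hT
  have hlogT' : log T ≤ T := log_le_self (by linarith)
  have hTlog : 1 ≤ T * log T := by nlinarith
  have hle := Nat.le_ceil (63 * (T * log T))
  have hlt := Nat.ceil_lt_add_one (show 0 ≤ 63 * (T * log T) by positivity)
  have hN2 : (2 : ℝ) ≤ ⌈63 * (T * log T)⌉₊ := by linarith
  refine ⟨⌈63 * (T * log T)⌉₊, by exact_mod_cast hN2, by linarith, ?_⟩
  have hlogN : log ⌈63 * (T * log T)⌉₊ ≤ 6 * log 2 + 2 * log T := by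
    have h64 : log (2 ^ 6 * T ^ 2) = 6 * log 2 + 2 * log T := by
      rw [log_mul (by positivity) (by positivity), log_pow, log_pow]
      norm_num
    rw [← h64]
    refine log_le_log (by linarith) ?_
    nlinarith
  have hlog2' := log_two_lt_d9
  calc T * (14 + 4 * log ⌈63 * (T * log T)⌉₊) ≤ T * (63 * log T) := by
        gcongr; linarith
    _ ≤ _ := by linarith

/-- deterministic additive-error embedding of JS into `ℓ₂²` in
`O((d²/ε)·log(d/ε))` dimensions. -/
theorem js_additive_embedding :
    ∃ C : ℝ, 0 < C ∧
      ∀ d : ℕ, 1 ≤ d → ∀ ε : ℝ, ε ∈ Set.Ioo (0 : ℝ) 1 →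
        ∃ (m : ℕ) (φ : (Fin d → ℝ) → EuclideanSpace ℝ (Fin m)),
          (m : ℝ) ≤ C * ((d : ℝ) ^ 2 / ε) * Real.log ((d : ℝ) / ε) ∧
          ∀ p ∈ stdSimplex ℝ (Fin d), ∀ q ∈ stdSimplex ℝ (Fin d),
            |‖φ p - φ q‖ ^ 2 - JS p q| ≤ ε := by
  refine ⟨65, by norm_num, fun d hd ε ⟨hε0, hε1⟩ ↦ ?_⟩
  rcases hd.eq_or_lt with rfl | hd
  · refine ⟨0, fun _ ↦ 0, ?_, fun p hp q hq ↦ ?_⟩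
    · have : 0 ≤ log (((1 : ℕ) : ℝ) / ε) :=
        log_nonneg (by rw [Nat.cast_one, le_div_iff₀ hε0]; linarith)
      simp only [Nat.cast_zero]
      positivity
    · have hpq : p = q := by
        have h1 := hp.2
        have h2 := hq.2
        rw [Fin.sum_univ_one] at h1 h2
        ext i
        rw [Subsingleton.elim i 0, h1, h2]
      simpa [hpq, JS_self] using hε0.le
  · have hd2 : (2 : ℝ) ≤ d := by exact_mod_cast hd
    have hT : 2 ≤ (d : ℝ) / ε := by rw [le_div_iff₀ hε0]; nlinarith
    obtain ⟨N, hN, hNT, hTN⟩ := exists_mesh hT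
    obtain ⟨φ, hφ⟩ := exists_grid_embedding_JS d hN
    refine ⟨d * (N + 1), φ, ?_, fun p hp q hq ↦ (hφ p hp q hq).trans ?_⟩
    · push_cast
      calc (d : ℝ) * (N + 1) ≤ d * (65 * (d / ε * log (d / ε))) := by gcongr
        _ = _ := by ring
    · have hN0 : (0 : ℝ) < N := by exact_mod_cast (by omega : 0 < N)
      rw [div_mul_eq_mul_div, div_le_iff₀ hε0] at hTN
      rw [← mul_div_assoc, div_le_iff₀ hN0]
      linarith
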